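/- Let G be a finite group, H ≤ G a subgroup of index n, and take l = 3. With G̃ = C₃^n ⋊ G, H̃ = C₃^n ⋊ H as in the associated construction, and χ: H̃ → C₃ the projection character (ζ₁,…,ζₙ, h) ↦ ζ₁, the induced representation Ind_{H̃}^{G̃}(χ) is an irreducible complex representation of G̃. -/

import Mathlib

noncomputable section

/-- The carrier of the representation of `G` induced from a one-dimensional character
`χ : H → ℂˣ` of a subgroup `H ≤ G`: the space of functions `f : G → ℂ` with
`f (h * g) = χ h * f g`. -/
def IndCarrier {G : Type} [Group G] (H : Subgroup G) (χ : H →* ℂˣ) : Submodule ℂ (G → ℂ) where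
  carrier := {f | ∀ (h : H) (g : G), f (↑h * g) = (χ h : ℂ) * f g}
  add_mem' := fun ha hb h g => by
    simp only [Set.mem_setOf_eq] at *
    simp [ha h g, hb h g, mul_add]
  zero_mem' := fun h g => by simp
  smul_mem' := fun c a ha h g => by
    simp only [Set.mem_setOf_eq] at *
    simp [ha h g]
    ring

/-- The representation of `G` induced from the one-dimensional character `χ` of `H ≤ G`,
realized on `IndCarrier H χ` by right translation. -/
def ind {G : Type} [Group G] (H : Subgroup G) (χ : H →* ℂˣ) :
    Representation ℂ G (IndCarrier H χ) where
  toFun g :=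
    { toFun := fun f => ⟨fun x => f.1 (x * g), fun h x => by
        simpa [mul_assoc] using f.2 h (x * g)⟩
      map_add' := fun f₁ f₂ => rfl
      map_smul' := fun c f => rfl }
  map_one' := by
    ext f x
    simp
  map_mul' g₁ g₂ := by
    ext f x
    simp [mul_assoc]

/-- Two representations are equivalent if there is a `ℂ`-linear equivalence intertwining the
two actions. -/
def RepEquiv {G V W : Type} [Group G] [AddCommGroup V] [Module ℂ V] [AddCommGroup W]
    [Module ℂ W] (ρ : Representation ℂ G V) (τ : Representation ℂ G W) : Prop :=
  ∃ e : V ≃ₗ[ℂ] W, ∀ (g : G) (v : V), e (ρ g v) = τ g (e v)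

/-- The direct sum of two representations. -/
def prodRep {G V W : Type} [Group G] [AddCommGroup V] [Module ℂ V] [AddCommGroup W]
    [Module ℂ W] (ρ : Representation ℂ G V) (τ : Representation ℂ G W) :
    Representation ℂ G (V × W) where
  toFun g := (ρ g).prodMap (τ g)
  map_one' := by ext <;> simp
  map_mul' g₁ g₂ := by ext <;> simp

/-- A representation is irreducible if the space is nonzero and the only invariant submodules
are `⊥` and `⊤`. -/
def IsIrreducibleRep {G V : Type} [Group G] [AddCommGroup V] [Module ℂ V]
    (ρ : Representation ℂ G V) : Prop :=
  Nontrivial V ∧ ∀ p : Submodule ℂ V, (∀ g : G, ∀ v ∈ p, ρ g v ∈ p) → p = ⊥ ∨ p = ⊤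

/-- The complex conjugate of a one-dimensional character. -/
def conjChar {H : Type} [Group H] (χ : H →* ℂˣ) : H →* ℂˣ :=
  (Units.map (starRingEnd ℂ).toMonoidHom).comp χ
/-- `C_l`: the group of `l`-th roots of unity in `ℂˣ`. -/
abbrev rootsC (l : ℕ) : Subgroup ℂˣ := rootsOfUnity l ℂ

variable (G : Type) [Group G] (H : Subgroup G) (l : ℕ)

/-- The automorphism of `C_l^{G/H}` permuting the coordinates according to the left
translation action of `g` on the cosets `G/H`. -/
def permAut (g : G) : ((G ⧸ H) → rootsC l) ≃* ((G ⧸ H) → rootsC l) where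
  toFun f x := f (g⁻¹ • x)
  invFun f x := f (g • x)
  left_inv f := funext fun x => by simp
  right_inv f := funext fun x => by simp
  map_mul' f₁ f₂ := rfl

/-- The action of `G` on `C_l^{G/H}` by permuting the coordinates as `G` permutes the left
cosets `G/H`. -/
def permHom : G →* MulAut ((G ⧸ H) → rootsC l) where
  toFun := permAut G H l
  map_one' := MulEquiv.ext fun f => funext fun x => by
    show f ((1 : G)⁻¹ • x) = f x
    rw [inv_one, one_smul]
  map_mul' g₁ g₂ := MulEquiv.ext fun f => funext fun x => by
    show f ((g₁ * g₂)⁻¹ • x) = f (g₂⁻¹ • g₁⁻¹ • x)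
    rw [mul_inv_rev, mul_smul]

/-- `G̃ = C_l^{G/H} ⋊ G`. -/
abbrev Gtil := ((G ⧸ H) → rootsC l) ⋊[permHom G H l] G

/-- `H̃ = C_l^{G/H} ⋊ H`, as a subgroup of `G̃`: the elements whose `G`-component lies
in `H`. -/
def Htil : Subgroup (Gtil G H l) := Subgroup.comap SemidirectProduct.rightHom H

/-- The character `χ : H̃ → C_l ⊆ ℂˣ` given by projection onto the coordinate indexed by the
trivial coset `H ∈ G/H`. -/
def chiTil : Htil G H l →* ℂˣ where
  toFun x := ((x.1.left ((1 : G) : G ⧸ H) : ℂˣ))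
  map_one' := by simp
  map_mul' x y := by
    have hxy : (x * y).1.left = x.1.left * permHom G H l x.1.right y.1.left :=
      SemidirectProduct.mul_left x.1 y.1
    have hmem : x.1.right ∈ H := x.2
    have hco : (x.1.right)⁻¹ • ((1 : G) : G ⧸ H) = ((1 : G) : G ⧸ H) := by
      show ((x.1.right⁻¹ * 1 : G) : G ⧸ H) = ((1 : G) : G ⧸ H)
      rw [mul_one]
      exact (QuotientGroup.eq).2 (by simpa using hmem)
    calc ((x * y).1.left ((1 : G) : G ⧸ H) : ℂˣ)
        = ((x.1.left ((1 : G) : G ⧸ H) * y.1.left ((x.1.right)⁻¹ • ((1 : G) : G ⧸ H)) : rootsC l) : ℂˣ) := by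
          rw [hxy]; rfl
      _ = (x.1.left ((1 : G) : G ⧸ H) : ℂˣ) * (y.1.left ((1 : G) : G ⧸ H) : ℂˣ) := by
          rw [hco]; push_cast; rfl

/-!
An element `a` of the normal core of `K` acts on an induced representation of `Γ` diagonally:
`f (y * a) = χ (y * a * y⁻¹) * f y`. If the conjugates of `χ` by the elements outside `K` all differ
from `χ` on the normal core, the operators `ind a - χ (y * a * y⁻¹)` therefore reduce any `f` with
`f 1 ≠ 0` to a nonzero function supported on `K`, and the translates of that function span. For
`C_l^{G/H} ⋊ G` the normal core contains `C_l^{G/H}`, and conjugating `χ` replaces the coordinate at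
the trivial coset by the coordinate at another one.
-/

namespace IndCarrier

variable {Γ : Type} [Group Γ] {K : Subgroup Γ} {χ : K →* ℂˣ}

theorem apply_mul (f : IndCarrier K χ) {k : Γ} (hk : k ∈ K) (y : Γ) :
    f.1 (k * y) = χ ⟨k, hk⟩ * f.1 y :=
  f.2 ⟨k, hk⟩ y

theorem apply_mul_of_conj_mem (f : IndCarrier K χ) {y a : Γ} (ha : y * a * y⁻¹ ∈ K) :
    f.1 (y * a) = χ ⟨y * a * y⁻¹, ha⟩ * f.1 y := by
  simpa using apply_mul f ha y

@[simp]
theorem coe_ind_apply (g : Γ) (f : IndCarrier K χ) (y : Γ) : (ind K χ g f).1 y = f.1 (y * g) :=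
  rfl

theorem ext_out_inv {f₁ f₂ : IndCarrier K χ}
    (h : ∀ x : Γ ⧸ K, f₁.1 x.out⁻¹ = f₂.1 x.out⁻¹) : f₁ = f₂ := by
  ext y
  obtain ⟨k, hk⟩ := QuotientGroup.mk_out_eq_mul K y⁻¹
  have hy : y = k * ((y⁻¹ : Γ) : Γ ⧸ K).out⁻¹ := by simp [hk]
  rw [hy, apply_mul f₁ k.2, apply_mul f₂ k.2]
  exact congrArg _ (h _)

variable (K χ) in
open Classical in
/-- The extension of `χ` by zero from `K` to the whole group: the function in the induced
representation that is supported on `K` and takes the value `1` at `1`. It generates the induced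
representation when `K` has finite index. -/
def delta : IndCarrier K χ :=
  ⟨fun y => if hy : y ∈ K then (χ ⟨y, hy⟩ : ℂ) else 0, fun k y => by
    by_cases hy : y ∈ K
    · beta_reduce
      rw [dif_pos (mul_mem k.2 hy), dif_pos hy, ← Units.val_mul, ← map_mul]
      rfl
    · simp [hy, K.mul_mem_cancel_left k.2]⟩

theorem delta_apply_of_mem {y : Γ} (hy : y ∈ K) : (delta K χ).1 y = χ ⟨y, hy⟩ :=
  dif_pos hy

theorem delta_apply_of_notMem {y : Γ} (hy : y ∉ K) : (delta K χ).1 y = 0 :=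
  dif_neg hy

theorem delta_apply_one : (delta K χ).1 1 = 1 := by
  rw [delta_apply_of_mem K.one_mem]
  exact congrArg Units.val χ.map_one

instance : Nontrivial (IndCarrier K χ) :=
  nontrivial_of_ne (delta K χ) 0 fun h => by
    simpa [h] using delta_apply_one (χ := χ)

open Classical in
theorem delta_apply_out_inv_mul_out (x z : Γ ⧸ K) :
    (delta K χ).1 (x.out⁻¹ * z.out) = if x = z then 1 else 0 := by
  split_ifs with hxz
  · rw [hxz, inv_mul_cancel, delta_apply_one]
  · refine delta_apply_of_notMem fun hmem => hxz ?_
    simpa using QuotientGroup.eq.2 hmem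

theorem eq_sum_ind_delta [Fintype (Γ ⧸ K)] (f : IndCarrier K χ) :
    f = ∑ z : Γ ⧸ K, f.1 z.out⁻¹ • ind K χ z.out (delta K χ) := by
  classical
  refine ext_out_inv fun x => ?_
  simp [delta_apply_out_inv_mul_out]

theorem eq_smul_delta {f : IndCarrier K χ} (hf : ∀ x : Γ ⧸ K, x.out⁻¹ ∉ K → f.1 x.out⁻¹ = 0) :
    f = f.1 1 • delta K χ := by
  refine ext_out_inv fun x => ?_
  change f.1 x.out⁻¹ = f.1 1 * (delta K χ).1 x.out⁻¹
  by_cases hx : x.out⁻¹ ∈ K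
  · rw [delta_apply_of_mem hx, mul_comm, ← apply_mul f hx, mul_one]
  · rw [delta_apply_of_notMem hx, mul_zero, hf x hx]

theorem exists_ind_apply_one_ne_zero {f : IndCarrier K χ} (hf : f ≠ 0) :
    ∃ g, (ind K χ g f).1 1 ≠ 0 := by
  contrapose! hf
  ext y
  simpa using hf y

variable {p : Submodule ℂ (IndCarrier K χ)}

theorem eq_top_of_delta_mem [K.FiniteIndex] (hp : ∀ g, ∀ f ∈ p, ind K χ g f ∈ p)
    (hδ : delta K χ ∈ p) : p = ⊤ := by
  have := Fintype.ofFinite (Γ ⧸ K)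
  refine eq_top_iff.2 fun f _ => ?_
  rw [eq_sum_ind_delta f]
  exact p.sum_mem fun z _ => p.smul_mem _ (hp _ _ hδ)

theorem exists_mem_apply_one_ne_zero_and_forall_eq_zero (hp : ∀ g, ∀ f ∈ p, ind K χ g f ∈ p)
    {f : IndCarrier K χ} (hf : f ∈ p) (hf1 : f.1 1 ≠ 0) (S : Finset Γ)
    (hS : ∀ y ∈ S, ∃ (a : Γ) (ha : a ∈ K.normalCore),
      χ ⟨y * a * y⁻¹, ha y⟩ ≠ χ ⟨a, K.normalCore_le ha⟩) :
    ∃ f' ∈ p, f'.1 1 ≠ 0 ∧ ∀ y ∈ S, f'.1 y = 0 := by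
  classical
  induction S using Finset.induction_on with
  | empty => exact ⟨f, hf, hf1, by simp⟩
  | insert y S _ ih =>
    obtain ⟨f', hf', hf'1, hf'S⟩ := ih fun z hz => hS z (Finset.mem_insert_of_mem hz)
    obtain ⟨a, ha, hχ⟩ := hS y (Finset.mem_insert_self y S)
    let c : ℂ := (χ ⟨y * a * y⁻¹, ha y⟩ : ℂˣ)
    have hval (z : Γ) :
        (ind K χ a f' - c • f').1 z = (χ ⟨z * a * z⁻¹, ha z⟩ - c) * f'.1 z := by
      rw [sub_mul, ← apply_mul_of_conj_mem f']
      rfl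
    refine ⟨ind K χ a f' - c • f', p.sub_mem (hp a f' hf') (p.smul_mem c hf'), ?_, ?_⟩
    · rw [hval]
      refine mul_ne_zero (sub_ne_zero.2 fun h => hχ (Units.ext ?_)) hf'1
      simpa [c] using h.symm
    · intro z hz
      rw [hval]
      obtain rfl | hzS := Finset.mem_insert.1 hz
      · rw [sub_self, zero_mul]
      · rw [hf'S z hzS, mul_zero]

end IndCarrier

open IndCarrier in
theorem isIrreducibleRep_ind_of_conj_ne {Γ : Type} [Group Γ] {K : Subgroup Γ} [K.FiniteIndex]
    {χ : K →* ℂˣ}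
    (hχ : ∀ y ∉ K, ∃ (a : Γ) (ha : a ∈ K.normalCore),
      χ ⟨y * a * y⁻¹, ha y⟩ ≠ χ ⟨a, K.normalCore_le ha⟩) :
    IsIrreducibleRep (ind K χ) := by
  classical
  have := Fintype.ofFinite (Γ ⧸ K)
  refine ⟨inferInstance, fun p hp => or_iff_not_imp_left.2 fun hbot => ?_⟩
  obtain ⟨f, hf, hf0⟩ := p.ne_bot_iff.1 hbot
  obtain ⟨g, hg⟩ := exists_ind_apply_one_ne_zero hf0
  let S : Finset Γ := (Finset.univ.image fun x : Γ ⧸ K => x.out⁻¹).filter (· ∉ K)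
  obtain ⟨f', hf', hf'1, hf'S⟩ :=
    exists_mem_apply_one_ne_zero_and_forall_eq_zero hp (hp g f hf) hg S
      fun y hy => hχ y (Finset.mem_filter.1 hy).2
  have hf'_eq : f' = f'.1 1 • delta K χ := eq_smul_delta fun x hx => hf'S _ (by simp [S, hx])
  rw [hf'_eq] at hf'
  exact eq_top_of_delta_mem hp ((p.smul_mem_iff hf'1).1 hf')

theorem nontrivial_rootsC {l : ℕ} (hl : l ≠ 1) : Nontrivial (rootsC l) := by
  obtain rfl | hl0 := eq_or_ne l 0
  · rw [rootsC, rootsOfUnity_zero]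
    exact (Subgroup.nontrivial_iff_exists_ne_one _).2 ⟨-1, trivial, by norm_num [Units.ext_iff]⟩
  · have : NeZero l := ⟨hl0⟩
    rw [← Finite.one_lt_card_iff_nontrivial, Complex.card_rootsOfUnity]
    omega

theorem mul_inl_mul_inv {N Q : Type*} [CommGroup N] [Group Q] {φ : Q →* MulAut N}
    (y : N ⋊[φ] Q) (a : N) :
    y * SemidirectProduct.inl a * y⁻¹ = SemidirectProduct.inl (φ y.right a) := by
  rw [mul_inv_eq_iff_eq_mul]
  ext1 <;> simp [mul_comm]

variable {G H l}

theorem inv_smul_mk_one_eq_iff {g : G} : g⁻¹ • ((1 : G) : G ⧸ H) = ((1 : G) : G ⧸ H) ↔ g ∈ H := by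
  rw [← MulAction.mem_stabilizer_iff, MulAction.stabilizer_quotient, inv_mem_iff]

theorem mem_Htil {y : Gtil G H l} : y ∈ Htil G H l ↔ y.right ∈ H :=
  Iff.rfl

theorem inl_mem_Htil (a : G ⧸ H → rootsC l) :
    (SemidirectProduct.inl a : Gtil G H l) ∈ Htil G H l := by
  simp [mem_Htil]

theorem inl_mem_normalCore_Htil (a : G ⧸ H → rootsC l) :
    (SemidirectProduct.inl a : Gtil G H l) ∈ (Htil G H l).normalCore := fun y => by
  rw [mul_inl_mul_inv]
  exact inl_mem_Htil _

theorem chiTil_inl (a : G ⧸ H → rootsC l) :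
    chiTil G H l ⟨SemidirectProduct.inl a, inl_mem_Htil a⟩ = a ((1 : G) : G ⧸ H) :=
  rfl

theorem chiTil_mul_inl_mul_inv (y : Gtil G H l) (a : G ⧸ H → rootsC l) :
    chiTil G H l ⟨y * SemidirectProduct.inl a * y⁻¹, inl_mem_normalCore_Htil a y⟩ =
      a (y.right⁻¹ • ((1 : G) : G ⧸ H)) := by
  simp only [mul_inl_mul_inv, chiTil_inl]
  rfl

instance [H.FiniteIndex] : (Htil G H l).FiniteIndex :=
  ⟨by
    rw [Htil, H.index_comap_of_surjective SemidirectProduct.rightHom_surjective]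
    exact Subgroup.FiniteIndex.index_ne_zero⟩

theorem stmt_6_general (G : Type) [Group G] (H : Subgroup G) [H.FiniteIndex] {l : ℕ} (hl : l ≠ 1) :
    IsIrreducibleRep (ind (Htil G H l) (chiTil G H l)) := by
  classical
  have := nontrivial_rootsC hl
  obtain ⟨ζ, hζ⟩ := exists_ne (1 : rootsC l)
  refine isIrreducibleRep_ind_of_conj_ne fun y hy => ?_
  let a : G ⧸ H → rootsC l := Pi.mulSingle ((1 : G) : G ⧸ H) ζ
  refine ⟨SemidirectProduct.inl a, inl_mem_normalCore_Htil a, ?_⟩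
  have hay : a (y.right⁻¹ • ((1 : G) : G ⧸ H)) = 1 :=
    Pi.mulSingle_eq_of_ne (M := fun _ => rootsC l)
      (inv_smul_mk_one_eq_iff.not.2 (mem_Htil.not.1 hy)) ζ
  have ha : a ((1 : G) : G ⧸ H) = ζ :=
    Pi.mulSingle_eq_same (M := fun _ => rootsC l) _ ζ
  rw [chiTil_mul_inl_mul_inv, chiTil_inl, hay, ha]
  exact fun h => hζ (Subtype.ext h.symm)

/-- The representation of `G̃ = C₃^{G/H} ⋊ G` induced from the projection character `χ` of
`H̃ = C₃^{G/H} ⋊ H` is irreducible. -/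
theorem stmt_6 (G : Type) [Group G] [Finite G] (H : Subgroup G) (n : ℕ) (hn : H.index = n) :
    IsIrreducibleRep (ind (Htil G H 3) (chiTil G H 3)) :=
  stmt_6_general G H (by decide)

end
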